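/- Let ⟨λ,ν⟩ be a reduced marked partition of type B (resp. C, D) of n that is not special, and set μ = d_S⟨λ,ν⟩. Then there is no marked partition ⟨μ,ξ⟩ of type C (resp. B, D) with underlying partition μ such that d_S⟨μ,ξ⟩ = λ. -/

import Mathlib

namespace NilDual

/-- A "partition" is encoded as a multiset of natural numbers (its parts). -/
abbrev Ptn := Multiset ℕ

/-- All parts are positive. -/
def IsPartition (l : Ptn) : Prop := ∀ a ∈ l, 0 < a

/-- `height l a` is the number of parts of `l` that are ≥ `a`. -/
def height (l : Ptn) (a : ℕ) : ℕ := Multiset.card (l.filter (fun p => a ≤ p))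

/-- `psum l j` is the sum of the `j` largest parts of `l`. -/
def psum (l : Ptn) (j : ℕ) : ℕ := ∑ a ∈ Finset.Icc 1 l.sum, min j (height l a)

/-- `Dom l m` means `l ≤ m` in the dominance order. -/
def Dom (l m : Ptn) : Prop := ∀ j : ℕ, psum l j ≤ psum m j

/-- The transpose (conjugate) partition. -/
def transpose (l : Ptn) : Ptn :=
  Multiset.filter (fun x => 0 < x)
    (Multiset.map (fun a => height l a) (Finset.Icc 1 l.sum).val)

/-- The largest part (0 for the empty partition). -/
def maxPart (l : Ptn) : ℕ := l.sup

/-- The smallest part (0 for the empty partition). -/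
noncomputable def minPart (l : Ptn) : ℕ := sInf {a : ℕ | a ∈ l}

/-- `λ⁺`: add 1 to the largest part. -/
def up (l : Ptn) : Ptn := (maxPart l + 1) ::ₘ l.erase (maxPart l)

/-- `λ⁻`: subtract 1 from the smallest part, deleting it if it becomes 0. -/
noncomputable def down (l : Ptn) : Ptn :=
  if minPart l ≤ 1 then l.erase (minPart l)
  else (minPart l - 1) ::ₘ l.erase (minPart l)

/-- The join `λ ∨ μ = (λ* ∪ μ*)*`. -/
def pjoin (l m : Ptn) : Ptn := transpose (transpose l + transpose m)

/-- `λ₋ = (λ*⁻)*`. -/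
noncomputable def lowerStar (l : Ptn) : Ptn := transpose (down (transpose l))

inductive PType | B | C | D
deriving DecidableEq

/-- Parts of this parity must occur with even multiplicity in a partition of type `X`. -/
def badPart : PType → ℕ → Prop
  | PType.B, a => Even a
  | PType.C, a => Odd a
  | PType.D, a => Even a

/-- Membership in `𝒫_X` (sum unconstrained). -/
def InP (X : PType) (l : Ptn) : Prop :=
  IsPartition l ∧ ∀ a : ℕ, badPart X a → Even (l.count a)

/-- The parity of `n` required for `𝒫_X(n)` to be defined. -/
def sumParity : PType → ℕ → Prop
  | PType.B, n => Odd n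
  | PType.C, n => Even n
  | PType.D, n => Even n

/-- `m` is the X-collapse of `l`: `m ∈ 𝒫_X(|l|)`, `m ≤ l` in dominance order, and `m`
dominates every member of `𝒫_X(|l|)` that is dominated by `l`. -/
def IsCollapse (X : PType) (l m : Ptn) : Prop :=
  InP X m ∧ m.sum = l.sum ∧ Dom m l ∧
    ∀ ν : Ptn, InP X ν → ν.sum = l.sum → Dom ν l → Dom ν m

def CollapseDefined (X : PType) (l : Ptn) : Prop := ∃ m, IsCollapse X l m

open Classical in
/-- The X-collapse `λ_X` (junk value `0` if it does not exist). -/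
noncomputable def collapse (X : PType) (l : Ptn) : Ptn :=
  if h : CollapseDefined X l then h.choose else 0

/-- `l` is superior to `m`: smallest part of `l` ≥ largest part of `m`. -/
def Superior (l m : Ptn) : Prop := maxPart m ≤ minPart l

def EvenlySuperior (l m : Ptn) : Prop := ∃ k : ℕ, Even k ∧ maxPart m ≤ k ∧ k ≤ minPart l

def OddlySuperior (l m : Ptn) : Prop := ∃ k : ℕ, Odd k ∧ maxPart m ≤ k ∧ k ≤ minPart l

/-- The parity required of marked parts in type `X`. -/
def markParity : PType → ℕ → Prop
  | PType.C, a => Even a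
  | _, a => Odd a

/-- `(ν, η)` is a marked partition of type `X`, with underlying partition `λ = ν + η`. -/
def IsMarked (X : PType) (nu eta : Ptn) : Prop :=
  InP X (nu + eta) ∧ sumParity X (nu + eta).sum ∧
  (∀ a ∈ nu, nu.count a = 1 ∧ markParity X a) ∧
  ((X = PType.B ∨ X = PType.D) → Even (Multiset.card nu))

/-- The Sommers duality map `d_S` on marked partitions `(ν, η)`. -/
noncomputable def dS (X : PType) (nu eta : Ptn) : Ptn :=
  match X with
  | PType.B => collapse PType.C (transpose (nu + collapse PType.C (down eta)))
  | PType.C => collapse PType.B (transpose (nu + collapse PType.B (up eta)))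
  | PType.D =>
      collapse PType.D (transpose (nu + transpose (collapse PType.D (transpose eta))))

/-- `a` is a markable part of `l` in type `X`. -/
def Markable (X : PType) (l : Ptn) (a : ℕ) : Prop :=
  a ∈ l ∧ markParity X a ∧
    (match X with
     | PType.B => Odd (height l a)
     | PType.C => Even (height l a)
     | PType.D => Even (height l a))

/-- The marked partition `⟨l, ν⟩` is reduced. -/
def Reduced (X : PType) (l nu : Ptn) : Prop := ∀ a ∈ nu, Markable X l a

/-- The parts entering the definition of a special marked partition:
even of odd height (B), odd of even height (C), even of even height (D). -/
def AntiPart (X : PType) (l : Ptn) (a : ℕ) : Prop :=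
  match X with
  | PType.B => Even a ∧ Odd (height l a)
  | PType.C => Odd a ∧ Even (height l a)
  | PType.D => Even a ∧ Even (height l a)

/-- The reduced marked partition `⟨l, ν⟩` is special. -/
def SpecialMP (X : PType) (l nu : Ptn) : Prop :=
  ∀ a ∈ l, AntiPart X l a → Even (height nu a)

/-- `a` is the largest part of `l` whose height satisfies `P`. -/
def LargestWith (l : Ptn) (P : ℕ → Prop) (a : ℕ) : Prop :=
  a ∈ l ∧ P (height l a) ∧ ∀ b ∈ l, P (height l b) → b ≤ a

/-- Height parity for the top marked part in a basic block. -/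
def heightParity : PType → ℕ → Prop
  | PType.B => fun n => Odd n
  | _ => fun n => Even n

/-- A basic block of type `X`. -/
def BasicBlock (X : PType) (nu eta : Ptn) : Prop :=
  IsMarked X nu eta ∧
  ((∃ n1 n2 : ℕ, n1 < n2 ∧ nu = {n2, n1} ∧ n1 = minPart (nu + eta) ∧
      LargestWith (nu + eta) (heightParity X) n2) ∨
   (X = PType.C ∧ ∃ n2 : ℕ, nu = {n2} ∧ LargestWith (nu + eta) (heightParity X) n2))

/-- An ultrabasic block: a basic block with `n₁ ≤ 1`. -/
def Ultrabasic (X : PType) (nu eta : Ptn) : Prop :=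
  BasicBlock X nu eta ∧ (Multiset.card nu = 2 → minPart nu ≤ 1)


/-- The Langlands-dual type. -/
def dualType : PType → PType
  | PType.B => PType.C
  | PType.C => PType.B
  | PType.D => PType.D

/-- `0` for type C, `1` for types B, D. -/
def th : PType → ℕ
  | PType.B => 1
  | PType.C => 0
  | PType.D => 1

/-- The `i`-th largest part (0-indexed). -/
def part (l : Ptn) (i : ℕ) : ℕ :=
  ((Finset.Icc 1 l.sum).filter (fun a => i < height l a)).card

/-- The sum of the first `k` columns. -/
def csum (l : Ptn) (k : ℕ) : ℕ := (l.map (fun x => min k x)).sum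

theorem height_zero (a : ℕ) : height 0 a = 0 := by simp [height]

theorem height_cons (x : ℕ) (l : Ptn) (a : ℕ) :
    height (x ::ₘ l) a = height l a + if a ≤ x then 1 else 0 := by
  unfold height
  by_cases h : a ≤ x
  · rw [Multiset.filter_cons_of_pos _ h]; simp [h]
  · rw [Multiset.filter_cons_of_neg _ h]; simp [h]

theorem height_add (l m : Ptn) (a : ℕ) : height (l + m) a = height l a + height m a := by
  simp [height]

theorem csum_cons (x : ℕ) (l : Ptn) (k : ℕ) : csum (x ::ₘ l) k = csum l k + min k x := by
  simp [csum, add_comm]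

theorem csum_add (l m : Ptn) (k : ℕ) : csum (l + m) k = csum l k + csum m k := by
  simp [csum]

theorem height_anti (l : Ptn) {a b : ℕ} (h : a ≤ b) : height l b ≤ height l a := by
  apply Multiset.card_le_card
  apply Multiset.monotone_filter_right
  intro x hx
  omega

theorem le_sum {l : Ptn} {a : ℕ} (h : a ∈ l) : a ≤ l.sum :=
  Multiset.single_le_sum (fun _ _ => Nat.zero_le _) a h

theorem height_eq_zero (l : Ptn) {a : ℕ} (h : l.sum < a) : height l a = 0 := by
  unfold height
  rw [Multiset.card_eq_zero, Multiset.filter_eq_nil]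
  intro x hx
  have := le_sum hx
  omega

theorem height_le_card (l : Ptn) (a : ℕ) : height l a ≤ Multiset.card l :=
  Multiset.card_le_card (Multiset.filter_le _ _)

theorem height_count (l : Ptn) (a : ℕ) : height l a = height l (a + 1) + l.count a := by
  induction l using Multiset.induction with
  | empty => simp [height_zero]
  | cons x l ih =>
    rw [height_cons, height_cons, ih, Multiset.count_cons]
    split_ifs <;> omega

theorem le_part (l : Ptn) {a : ℕ} (i : ℕ) (ha : 1 ≤ a) : a ≤ part l i ↔ i < height l a := by
  constructor
  · intro h
    by_contra hc
    have : part l i ≤ (Finset.Icc 1 (a - 1)).card := by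
      apply Finset.card_le_card
      intro b hb
      simp only [Finset.mem_filter, Finset.mem_Icc] at hb ⊢
      refine ⟨hb.1.1, ?_⟩
      by_contra hc2
      have := height_anti l (show a ≤ b by omega)
      omega
    simp at this
    omega
  · intro h
    have h1 : a ≤ l.sum := by
      by_contra hc
      have := height_eq_zero l (show l.sum < a by omega)
      omega
    have : (Finset.Icc 1 a).card ≤ part l i := by
      apply Finset.card_le_card
      intro b hb
      simp only [Finset.mem_filter, Finset.mem_Icc] at hb ⊢
      have := height_anti l hb.2
      omega
    simpa using this

theorem eq_of_le_iff {x y : ℕ} (h : ∀ a, 1 ≤ a → (a ≤ x ↔ a ≤ y)) : x = y := by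
  apply le_antisymm
  · rcases Nat.eq_zero_or_pos x with h0 | h0
    · omega
    · exact (h x h0).1 le_rfl
  · rcases Nat.eq_zero_or_pos y with h0 | h0
    · omega
    · exact (h y h0).2 le_rfl

theorem part_anti (l : Ptn) {i j : ℕ} (h : i ≤ j) : part l j ≤ part l i := by
  apply Finset.card_le_card
  intro b hb
  simp only [Finset.mem_filter] at hb ⊢
  exact ⟨hb.1, by omega⟩

theorem part_le (l : Ptn) {k i : ℕ} (h : height l k ≤ i) : part l i ≤ k := by
  by_contra hc
  have := (le_part l (a := k + 1) i (by omega)).1 (by omega)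
  have := height_anti l (show k ≤ k + 1 by omega)
  omega

theorem le_part' (l : Ptn) {k i : ℕ} (h : i < height l k) : k ≤ part l i := by
  rcases Nat.eq_zero_or_pos k with h0 | h0
  · omega
  · exact (le_part l i h0).2 h

theorem psum_zero (l : Ptn) : psum l 0 = 0 := by simp [psum]

theorem psum_succ (l : Ptn) (j : ℕ) : psum l (j + 1) = psum l j + part l j := by
  unfold psum part
  rw [Finset.card_filter, ← Finset.sum_add_distrib]
  apply Finset.sum_congr rfl
  intro a _
  split_ifs <;> omega

theorem csum_zero (l : Ptn) : csum l 0 = 0 := by simp [csum]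

theorem csum_succ (l : Ptn) (k : ℕ) : csum l (k + 1) = csum l k + height l (k + 1) := by
  induction l using Multiset.induction with
  | empty => simp [height_zero, csum]
  | cons x l ih =>
    rw [csum_cons, csum_cons, height_cons, ih]
    split_ifs <;> omega

theorem height_filter_pos (l : Ptn) {a : ℕ} (ha : 1 ≤ a) :
    height (l.filter (fun x => 0 < x)) a = height l a := by
  unfold height
  rw [Multiset.filter_filter]
  congr 1
  apply Multiset.filter_congr
  intro x _
  omega

theorem height_map (s : Finset ℕ) (f : ℕ → ℕ) (a : ℕ) :
    height (s.val.map f) a = (s.filter (fun x => a ≤ f x)).card := by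
  unfold height
  rw [Multiset.filter_map, Multiset.card_map]
  rfl

theorem height_transpose (l : Ptn) (i : ℕ) : height (transpose l) (i + 1) = part l i := by
  unfold transpose
  rw [height_filter_pos _ (by omega), height_map]
  rfl

theorem part_transpose (l : Ptn) (j : ℕ) : part (transpose l) j = height l (j + 1) := by
  apply eq_of_le_iff
  intro a ha
  obtain ⟨b, rfl⟩ : ∃ b, a = b + 1 := ⟨a - 1, by omega⟩
  rw [le_part _ _ ha, height_transpose]
  have := le_part l (a := j + 1) b (by omega)
  omega

theorem psum_transpose (l : Ptn) (j : ℕ) : psum (transpose l) j = csum l j := by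
  induction j with
  | zero => rw [psum_zero, csum_zero]
  | succ j ih => rw [psum_succ, csum_succ, ih, part_transpose]

theorem csum_transpose (l : Ptn) (j : ℕ) : csum (transpose l) j = psum l j := by
  induction j with
  | zero => rw [psum_zero, csum_zero]
  | succ j ih => rw [psum_succ, csum_succ, ih, height_transpose]

theorem isPartition_transpose (l : Ptn) : IsPartition (transpose l) := by
  intro a ha
  unfold transpose at ha
  exact (Multiset.mem_filter.1 ha).2

theorem sum_min (l : Ptn) (k N : ℕ) (hN : ∀ x ∈ l, x ≤ N) :
    ∑ a ∈ Finset.Icc 1 N, height l (max k a) = (l.filter (fun p => k ≤ p)).sum := by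
  induction l using Multiset.induction with
  | empty => simp [height_zero]
  | cons x l ih =>
    simp only [height_cons, Finset.sum_add_distrib]
    rw [ih (fun y hy => hN y (Multiset.mem_cons_of_mem hy))]
    have hx := hN x (Multiset.mem_cons_self x l)
    rw [← Finset.card_filter]
    by_cases h : k ≤ x
    · rw [Multiset.filter_cons_of_pos (p := fun p => k ≤ p) l h, Multiset.sum_cons]
      have : (Finset.Icc 1 N).filter (fun a => max k a ≤ x) = Finset.Icc 1 x := by
        ext b; simp only [Finset.mem_filter, Finset.mem_Icc]; omega
      rw [this]; simp; omega
    · rw [Multiset.filter_cons_of_neg (p := fun p => k ≤ p) l h]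
      have : (Finset.Icc 1 N).filter (fun a => max k a ≤ x) = ∅ := by
        ext b; simp only [Finset.mem_filter, Finset.mem_Icc, Finset.notMem_empty, iff_false]; omega
      rw [this]; simp

theorem psum_height (l : Ptn) (k : ℕ) :
    psum l (height l k) = (l.filter (fun p => k ≤ p)).sum := by
  rw [← sum_min l k l.sum (fun x hx => le_sum hx)]
  unfold psum
  apply Finset.sum_congr rfl
  intro a _
  rcases le_total k a with h | h
  · rw [max_eq_right h, min_eq_right (height_anti l h)]
  · rw [max_eq_left h, min_eq_left (height_anti l h)]

theorem csum_filter (l : Ptn) (k : ℕ) :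
    csum l k + (l.filter (fun p => k ≤ p)).sum = k * height l k + l.sum := by
  induction l using Multiset.induction with
  | empty => simp [height_zero, csum]
  | cons x l ih =>
    rw [csum_cons, height_cons, Multiset.sum_cons]
    by_cases h : k ≤ x
    · rw [Multiset.filter_cons_of_pos (p := fun p => k ≤ p) l h, Multiset.sum_cons, if_pos h, min_eq_left h, mul_add]
      omega
    · rw [Multiset.filter_cons_of_neg (p := fun p => k ≤ p) l h, if_neg h, min_eq_right (by omega), add_zero]
      omega

theorem legendre_eq (l : Ptn) (k : ℕ) :
    csum l k + psum l (height l k) = k * height l k + l.sum := by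
  rw [psum_height, csum_filter]

theorem psum_up (l : Ptn) (k d : ℕ) :
    psum l (height l k + d) ≤ psum l (height l k) + k * d := by
  induction d with
  | zero => simp
  | succ d ih =>
    have := part_le l (k := k) (i := height l k + d) (by omega)
    rw [← add_assoc, psum_succ, mul_add]
    omega

theorem psum_down (l : Ptn) (k j d : ℕ) (h : j + d ≤ height l k) :
    psum l j + k * d ≤ psum l (j + d) := by
  induction d with
  | zero => simp
  | succ d ih =>
    have := le_part' l (k := k) (i := j + d) (by omega)
    have := ih (by omega)
    rw [← add_assoc, psum_succ, mul_add]
    omega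

theorem legendre (l : Ptn) (k j : ℕ) : csum l k + psum l j ≤ k * j + l.sum := by
  have h := legendre_eq l k
  rcases le_total (height l k) j with h1 | h1
  · obtain ⟨d, rfl⟩ := Nat.exists_eq_add_of_le h1
    have := psum_up l k d
    rw [mul_add]; omega
  · obtain ⟨d, hd⟩ := Nat.exists_eq_add_of_le h1
    have := psum_down l k j d (by omega)
    rw [← hd] at this
    have h3 : k * height l k = k * j + k * d := by rw [hd, mul_add]
    omega

theorem psum_large (l : Ptn) {j : ℕ} (h : Multiset.card l ≤ j) : psum l j = l.sum := by
  have h0 : psum l (height l 0) = l.sum := by rw [psum_height]; simp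
  have hc : height l 0 = Multiset.card l := by simp [height]
  obtain ⟨d, rfl⟩ := Nat.exists_eq_add_of_le h
  have h1 := psum_up l 0 d
  have h2 := psum_down l 0 (height l 0) 0 (by omega)
  have h3 := legendre l 0 (Multiset.card l + d)
  have h4 : psum l (height l 0) ≤ psum l (height l 0 + d) := by
    clear h1 h3
    induction d with
    | zero => simp
    | succ d ih => rw [← add_assoc, psum_succ]; have := ih (by omega); omega
  rw [hc] at h0 h4
  have := csum_zero l
  omega

theorem csum_large (l : Ptn) {k : ℕ} (h : l.sum ≤ k) : csum l k = l.sum := by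
  unfold csum
  conv_rhs => rw [← Multiset.map_id l]
  congr 1
  apply Multiset.map_congr rfl
  intro x hx
  have := le_sum hx
  simp; omega

theorem sum_transpose (l : Ptn) : (transpose l).sum = l.sum := by
  have h1 := csum_transpose l (max (Multiset.card l) (transpose l).sum)
  rw [csum_large _ (le_max_right _ _), psum_large _ (le_max_left _ _)] at h1
  exact h1

theorem csum_le_of_dom {l m : Ptn} (h : Dom m l) (hs : m.sum = l.sum) (k : ℕ) :
    csum l k ≤ csum m k := by
  have h1 := legendre_eq m k
  have h2 := legendre l k (height m k)
  have h3 := h (height m k)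
  omega

theorem psum_filter_parity (θ : ℕ) (m : Ptn)
    (h : ∀ a, (a + θ) % 2 = 1 → Even (m.count a)) :
    (m.sum + θ * Multiset.card m) % 2 = 0 := by
  have e : m.sum + θ * Multiset.card m = ∑ x ∈ m.toFinset, m.count x * (x + θ) := by
    rw [Finset.sum_multiset_count m, ← Multiset.toFinset_sum_count_eq m, Finset.mul_sum,
      ← Finset.sum_add_distrib]
    apply Finset.sum_congr rfl
    intro x _
    simp; ring
  rw [e, ← Nat.even_iff]
  apply Finset.even_sum
  intro x _
  rcases Nat.mod_two_eq_zero_or_one (x + θ) with h1 | h1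
  · exact (Nat.even_iff.2 h1).mul_left _
  · exact (h x h1).mul_right _

theorem bad_iff (X : PType) (a : ℕ) : badPart X a ↔ (a + th X) % 2 = 1 := by
  cases X <;> simp only [badPart, th, Nat.even_iff, Nat.odd_iff] <;> omega

theorem th_cases (X : PType) : th X = 0 ∨ th X = 1 := by cases X <;> simp [th]

theorem psum_height_parity {X : PType} {m : Ptn} (hm : InP X m) (a : ℕ) :
    (psum m (height m a) + th X * height m a) % 2 = 0 := by
  rw [psum_height]
  apply psum_filter_parity
  intro b hb
  rw [Multiset.count_filter]
  split_ifs
  · exact hm.2 b ((bad_iff X b).2 hb)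
  · simp

theorem psum_linear (m : Ptn) (a j d : ℕ) (h : ∀ i, j ≤ i → i < j + d → part m i = a) :
    psum m (j + d) = psum m j + a * d := by
  induction d with
  | zero => simp
  | succ d ih =>
    rw [← add_assoc, psum_succ, ih (fun i h1 h2 => h i h1 (by omega)),
      h (j + d) (by omega) (by omega)]
    ring

theorem parity_or {X : PType} {m : Ptn} (hm : InP X m) (j : ℕ) :
    (psum m (j + 1) + th X * (j + 1)) % 2 = 0 ∨
      (part m j = part m (j + 1) ∧ (part m j + th X) % 2 = 1) := by
  by_cases hodd : (part m j + th X) % 2 = 1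
  · by_cases hc : part m j = part m (j + 1)
    · exact Or.inr ⟨hc, hodd⟩
    · left
      have h1 := part_anti m (show j ≤ j + 1 by omega)
      have h2 : 1 ≤ part m j := by omega
      have h3 := (le_part m j h2).1 le_rfl
      have h4 := (le_part m (j + 1) h2)
      have h5 : height m (part m j) = j + 1 := by omega
      have := psum_height_parity hm (part m j)
      rwa [h5] at this
  · left
    have h1 := psum_height_parity hm (part m j + 1)
    have h2 := le_part m (a := part m j + 1) j (by omega)
    obtain ⟨d, hd⟩ := Nat.exists_eq_add_of_le (show height m (part m j + 1) ≤ j + 1 by omega)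
    have h3 := psum_linear m (part m j) (height m (part m j + 1)) d (by
      intro i h3 h4
      have := part_anti m (show i ≤ j by omega)
      have := le_part m (a := part m j + 1) i (by omega)
      omega)
    rw [hd, h3]
    generalize height m (part m j + 1) = H at *
    have e : psum m H + part m j * d + th X * (H + d)
      = (psum m H + th X * H) + d * (part m j + th X) := by ring
    rw [e, Nat.add_mod, h1, Nat.mul_mod]
    have : (part m j + th X) % 2 = 0 := by omega
    simp [this]

theorem exists_of_seq (f : ℕ → ℕ) (hf : ∀ i, f (i + 1) ≤ f i) (N : ℕ) (hN : f N = 0) :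
    ∃ m : Ptn, IsPartition m ∧ ∀ i, part m i = f i := by
  have hanti : Antitone f := antitone_nat_of_succ_le hf
  let l0 : Ptn := (Finset.range N).val.map f
  refine ⟨transpose (transpose l0), isPartition_transpose _, fun i => ?_⟩
  rw [part_transpose, height_transpose]
  apply eq_of_le_iff
  intro a ha
  rw [le_part _ _ ha, height_map]
  constructor
  · intro h
    by_contra hc
    have : ((Finset.range N).filter (fun x => a ≤ f x)).card ≤ (Finset.range i).card := by
      apply Finset.card_le_card
      intro b hb
      simp only [Finset.mem_filter, Finset.mem_range] at hb ⊢
      by_contra hc2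
      have := hanti (show i ≤ b by omega)
      omega
    rw [Finset.card_range] at this
    omega
  · intro h
    have : (Finset.range (i + 1)).card ≤ ((Finset.range N).filter (fun x => a ≤ f x)).card := by
      apply Finset.card_le_card
      intro b hb
      simp only [Finset.mem_filter, Finset.mem_range] at hb ⊢
      have h1 := hanti (show b ≤ i by omega)
      refine ⟨?_, by omega⟩
      by_contra hc2
      have := hanti (show N ≤ b by omega)
      omega
    rw [Finset.card_range] at this
    omega

theorem inP_of_corners (X : PType) (m : Ptn) (hp : IsPartition m)
    (h : ∀ j, part m (j + 1) < part m j → (psum m (j + 1) + th X * (j + 1)) % 2 = 0) :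
    InP X m := by
  refine ⟨hp, fun a ha => ?_⟩
  rw [bad_iff] at ha
  rcases Nat.eq_zero_or_pos a with h0 | h0
  · subst h0
    rw [Multiset.count_eq_zero_of_notMem (fun hc => by have := hp 0 hc; omega)]
    simp
  have key : ∀ b, 1 ≤ b → (psum m (height m b) + th X * height m b) % 2 = 0 := by
    intro b hb
    rcases Nat.eq_zero_or_pos (height m b) with h1 | h1
    · rw [h1, psum_zero]; simp
    · obtain ⟨j, hj⟩ : ∃ j, height m b = j + 1 := ⟨height m b - 1, by omega⟩
      rw [hj]
      apply h
      have h2 := le_part m j hb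
      have h3 := le_part m (j + 1) hb
      omega
  have k1 := key a h0
  have k2 := key (a + 1) (by omega)
  have hc := height_count m a
  have hl := psum_linear m a (height m (a + 1)) (m.count a) (by
    intro i h1 h2
    have h3 := le_part m i h0
    have h4 := le_part m (a := a + 1) i (by omega)
    omega)
  rw [← hc] at hl
  rw [hl, hc] at k1
  generalize height m (a + 1) = H at *
  generalize Multiset.count a m = c at *
  have e : psum m H + a * c + th X * (H + c) = (psum m H + th X * H) + c * (a + th X) := by ring
  rw [e, Nat.add_mod, k2, Nat.mul_mod, ha] at k1
  rw [Nat.even_iff]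
  omega

/-- The decrement of the `j`-th partial sum under collapse. -/
def ee (θ : ℕ) (l : Ptn) : ℕ → ℕ
  | 0 => 0
  | j + 1 => if (psum l (j + 1) + θ * (j + 1)) % 2 = 1 ∧
      ¬ (part l j = part l (j + 1) ∧ (part l j + θ) % 2 = 1) then 1 else 0

theorem ee_cases (θ : ℕ) (l : Ptn) (j : ℕ) :
    (ee θ l (j + 1) = 1 ∧ (psum l (j + 1) + θ * (j + 1)) % 2 = 1 ∧
      ¬ (part l j = part l (j + 1) ∧ (part l j + θ) % 2 = 1)) ∨
    (ee θ l (j + 1) = 0 ∧ ((psum l (j + 1) + θ * (j + 1)) % 2 = 0 ∨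
      (part l j = part l (j + 1) ∧ (part l j + θ) % 2 = 1))) := by
  rw [ee]
  split_ifs with h
  · exact Or.inl ⟨rfl, h⟩
  · right
    refine ⟨rfl, ?_⟩
    by_contra hc
    apply h
    push Not at hc ⊢
    exact ⟨by omega, hc.2⟩

theorem ee_step (θ : ℕ) (hθ : θ = 0 ∨ θ = 1) (l : Ptn) (j : ℕ) :
    ee θ l (j + 1) ≤ part l j + ee θ l j ∧
    part l (j + 1) + ee θ l (j + 1) + ee θ l (j + 1) ≤ part l j + ee θ l j + ee θ l (j + 2) ∧
    ((psum l (j + 1) + θ * (j + 1)) % 2 ≠ ee θ l (j + 1) →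
      part l j = part l (j + 1) ∧ ee θ l (j + 1) = 0 ∧ ee θ l j = 0 ∧ ee θ l (j + 2) = 0) := by
  have a1 := part_anti l (show j ≤ j + 1 by omega)
  have a2 := part_anti l (show j + 1 ≤ j + 2 by omega)
  have s1 := psum_succ l j
  have s2 := psum_succ l (j + 1)
  have c1 := ee_cases θ l j
  have c2 := ee_cases θ l (j + 1)
  rw [show j + 1 + 1 = j + 2 from rfl] at *
  rcases j with _ | i
  · have e0 : ee θ l 0 = 0 := rfl
    have z := psum_zero l
    rcases hθ with rfl | rfl <;> simp only [zero_mul, one_mul, zero_add, add_zero] at * <;> omega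
  · have a0 := part_anti l (show i ≤ i + 1 by omega)
    have c0 := ee_cases θ l i
    have s0 := psum_succ l i
    rcases hθ with rfl | rfl <;> simp only [zero_mul, one_mul, add_zero] at * <;> omega

theorem psum_ub {X : PType} {l m : Ptn} (hm : InP X m) (hd : Dom m l) (j : ℕ) :
    psum m j + ee (th X) l j ≤ psum l j := by
  rcases j with _ | j
  · have := hd 0
    simpa [ee] using this
  have d0 := hd j
  have d1 := hd (j + 1)
  have d2 := hd (j + 2)
  have s0 := psum_succ l j
  have s1 := psum_succ l (j + 1)
  have t0 := psum_succ m j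
  have t1 := psum_succ m (j + 1)
  have a1 := part_anti l (show j ≤ j + 1 by omega)
  have a2 := part_anti m (show j ≤ j + 1 by omega)
  have p := parity_or hm j
  rw [show j + 1 + 1 = j + 2 from rfl] at *
  by_contra hc
  rcases ee_cases (th X) l j with ⟨c1, c2, c3⟩ | ⟨c1, c2⟩
  · have e : psum m (j + 1) = psum l (j + 1) := by omega
    rw [e] at p
    rcases p with p | p
    · omega
    · apply c3
      have q1 : part l j = part m j := by omega
      have q2 : part l (j + 1) = part m (j + 1) := by omega
      rw [q1, q2]; exact p
  · omega

theorem exists_collapse (X : PType) (l : Ptn) (hX : X = PType.C → Even l.sum) :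
    ∃ m, IsCollapse X l m ∧ ∀ j, psum m j + ee (th X) l j = psum l j := by
  have st := ee_step (th X) (th_cases X) l
  let N := Multiset.card l + 1
  have hz : ∀ j, Multiset.card l ≤ j → part l j = 0 := by
    intro j hj
    have := part_le l (k := 0) (i := j) ((height_le_card l 0).trans hj)
    omega
  have hez : ∀ j, Multiset.card l + 1 ≤ j → ee (th X) l j = 0 := by
    intro j hj
    obtain ⟨i, rfl⟩ : ∃ i, j = i + 1 := ⟨j - 1, by omega⟩
    have h1 := hz i (by omega)
    have h2 := hz (i + 1) (by omega)
    have h3 := psum_large l (j := i + 1) (by omega)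
    rcases ee_cases (th X) l i with ⟨c1, c2, c3⟩ | ⟨c1, c2⟩
    · exfalso
      rw [h1, h2] at c3
      rw [h3] at c2
      cases X
      · exact c3 ⟨rfl, rfl⟩
      · have := hX rfl
        rw [Nat.even_iff] at this
        simp only [th] at c2
        omega
      · exact c3 ⟨rfl, rfl⟩
    · exact c1
  obtain ⟨m, hp, hm⟩ := exists_of_seq (fun j => part l j + ee (th X) l j - ee (th X) l (j + 1))
    (by
      intro j
      have h1 := st j
      have h2 := st (j + 1)
      rw [show j + 1 + 1 = j + 2 from rfl] at *
      omega) (Multiset.card l + 1)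
    (by
      rw [hz _ (by omega), hez _ (by omega)]
      omega)
  have hps : ∀ j, psum m j + ee (th X) l j = psum l j := by
    intro j
    induction j with
    | zero => simp [psum_zero, ee]
    | succ j ih =>
      have h1 := (st j).1
      rw [psum_succ, psum_succ, hm]
      omega
  have hsum : m.sum = l.sum := by
    have h1 := hps (max (Multiset.card m) (Multiset.card l + 1))
    rw [psum_large m (le_max_left _ _), hez _ (le_max_right _ _),
      psum_large l (by omega)] at h1
    omega
  have hd : Dom m l := fun j => by have := hps j; omega
  refine ⟨m, ⟨?_, hsum, hd, ?_⟩, hps⟩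
  · apply inP_of_corners X m hp
    intro j hj
    rw [hm, hm] at hj
    rw [show j + 1 + 1 = j + 2 from rfl] at *
    have h1 := st j
    have h2 := st (j + 1)
    have h3 := hps (j + 1)
    by_cases hc : (psum l (j + 1) + th X * (j + 1)) % 2 = ee (th X) l (j + 1)
    · omega
    · have := h1.2.2 hc
      omega
  · intro ν h1 _ h3 j
    have := psum_ub h1 h3 j
    have := hps j
    omega

theorem collapse_spec (X : PType) (l : Ptn) (hX : X = PType.C → Even l.sum) :
    IsCollapse X l (collapse X l) ∧ ∀ j, psum (collapse X l) j + ee (th X) l j = psum l j := by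
  obtain ⟨m, hm, hps⟩ := exists_collapse X l hX
  have hd : CollapseDefined X l := ⟨m, hm⟩
  have hs : IsCollapse X l (collapse X l) := by
    unfold collapse
    rw [dif_pos hd]
    exact hd.choose_spec
  refine ⟨hs, fun j => ?_⟩
  have h1 := hs.2.2.2 m hm.1 hm.2.1 hm.2.2.1 j
  have h2 := psum_ub hs.1 hs.2.2.1 j
  have h3 := hps j
  omega

theorem ee_le (θ : ℕ) (l : Ptn) (j : ℕ) : ee θ l j ≤ 1 := by
  rcases j with _ | j
  · simp [ee]
  · have := ee_cases θ l j
    omega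

theorem ee_even (θ : ℕ) (l : Ptn) (j : ℕ) (h : (psum l j + θ * j) % 2 = 0) : ee θ l j = 0 := by
  rcases j with _ | j
  · simp [ee]
  · have := ee_cases θ l j
    omega

/-- If the collapse has the wrong parity at `j`, nothing was decremented there. -/
theorem ee_odd (θ : ℕ) (l : Ptn) (j s : ℕ) (hs : s + ee θ l j = psum l j)
    (h : (s + θ * j) % 2 = 1) : ee θ l j = 0 := by
  rcases j with _ | j
  · simp [ee]
  · have := ee_cases θ l j
    omega

theorem psum_congr (l m : Ptn) (j : ℕ) (h : ∀ i < j, part l i = part m i) :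
    psum l j = psum m j := by
  induction j with
  | zero => rw [psum_zero, psum_zero]
  | succ j ih =>
    rw [psum_succ, psum_succ, ih (fun i hi => h i (by omega)), h j (by omega)]

theorem minPart_mem {l : Ptn} (h : l ≠ 0) : minPart l ∈ l := by
  obtain ⟨x, hx⟩ := Multiset.exists_mem_of_ne_zero h
  exact Nat.sInf_mem (s := {a : ℕ | a ∈ l}) ⟨x, hx⟩

theorem minPart_le {l : Ptn} {x : ℕ} (h : x ∈ l) : minPart l ≤ x :=
  Nat.sInf_le (s := {a : ℕ | a ∈ l}) h

theorem down_form {l : Ptn} (hp : IsPartition l) (h : l ≠ 0) :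
    ∃ x e, l = x ::ₘ e ∧ 1 ≤ x ∧ (∀ y ∈ e, x ≤ y) ∧
      ((x = 1 ∧ down l = e) ∨ (2 ≤ x ∧ down l = (x - 1) ::ₘ e)) := by
  have h1 := minPart_mem h
  have h2 := hp _ h1
  refine ⟨minPart l, l.erase (minPart l), (Multiset.cons_erase h1).symm, h2,
    fun y hy => minPart_le (Multiset.mem_of_mem_erase hy), ?_⟩
  unfold down
  split_ifs with h3
  · left; exact ⟨by omega, rfl⟩
  · right; exact ⟨by omega, rfl⟩

theorem sum_down {l : Ptn} (hp : IsPartition l) (h : l ≠ 0) : (down l).sum + 1 = l.sum := by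
  obtain ⟨x, e, rfl, h1, -, ⟨h3, h4⟩ | ⟨h3, h4⟩⟩ := down_form hp h
  · rw [h4, Multiset.sum_cons]; omega
  · rw [h4, Multiset.sum_cons, Multiset.sum_cons]; omega

theorem csum_down {l : Ptn} (hp : IsPartition l) (h : l ≠ 0) (k : ℕ) :
    csum l k ≤ csum (down l) k + 1 := by
  obtain ⟨x, e, rfl, h1, -, ⟨h3, h4⟩ | ⟨h3, h4⟩⟩ := down_form hp h
  · rw [h4, csum_cons]; omega
  · rw [h4, csum_cons, csum_cons]; omega

theorem height_all {e : Ptn} {x : ℕ} (h : ∀ y ∈ e, x ≤ y) : height e x = Multiset.card e := by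
  unfold height
  rw [Multiset.filter_eq_self.2 h]

theorem psum_down_eq {l : Ptn} (hp : IsPartition l) (h : l ≠ 0) {j : ℕ}
    (hj : j < Multiset.card l) : psum (down l) j = psum l j := by
  obtain ⟨x, e, rfl, h1, h2, h3⟩ := down_form hp h
  have hx := height_all h2
  rw [Multiset.card_cons] at hj
  apply psum_congr
  intro i hi
  apply eq_of_le_iff
  intro a ha
  rw [le_part _ _ ha, le_part _ _ ha, height_cons]
  rcases h3 with ⟨h3, h4⟩ | ⟨h3, h4⟩
  · rw [h4]
    by_cases hax : a ≤ x
    · have := height_anti e hax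
      rw [if_pos hax]; omega
    · rw [if_neg hax]; omega
  · rw [h4, height_cons]
    by_cases hax : a ≤ x
    · have := height_anti e hax
      rw [if_pos hax]; split_ifs <;> omega
    · rw [if_neg hax, if_neg (by omega)]

theorem maxPart_mem {l : Ptn} (h : l ≠ 0) : maxPart l ∈ l := by
  unfold maxPart
  induction l using Multiset.induction with
  | empty => exact absurd rfl h
  | cons x l ih =>
    rw [Multiset.sup_cons]
    by_cases h0 : l = 0
    · subst h0; simp
    · have := ih h0
      rcases le_total x l.sup with h1 | h1
      · rw [sup_eq_right.2 h1]; exact Multiset.mem_cons_of_mem this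
      · rw [sup_eq_left.2 h1]; exact Multiset.mem_cons_self _ _

theorem le_maxPart {l : Ptn} {x : ℕ} (h : x ∈ l) : x ≤ maxPart l := Multiset.le_sup h

theorem csum_up (l : Ptn) (k : ℕ) : csum l k ≤ csum (up l) k := by
  by_cases h : l = 0
  · subst h; simp [csum]
  · have h1 := maxPart_mem h
    unfold up
    conv_lhs => rw [← Multiset.cons_erase h1]
    rw [csum_cons, csum_cons]
    omega

theorem sum_up {l : Ptn} (h : l ≠ 0) : (up l).sum = l.sum + 1 := by
  have h1 := maxPart_mem h
  unfold up
  conv_rhs => rw [← Multiset.cons_erase h1]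
  rw [Multiset.sum_cons, Multiset.sum_cons]
  omega

theorem psum_up_eq {l : Ptn} (h : l ≠ 0) (j : ℕ) : psum (up l) (j + 1) = psum l (j + 1) + 1 := by
  have h1 := maxPart_mem h
  obtain ⟨x, hx⟩ : ∃ x, x = maxPart l := ⟨_, rfl⟩
  have hle : ∀ y ∈ l, y ≤ x := fun y hy => hx ▸ le_maxPart hy
  have hcons : x ::ₘ l.erase x = l := by rw [hx]; exact Multiset.cons_erase h1
  have hH : ∀ b, height (up l) b = height l b + if b = x + 1 then 1 else 0 := by
    intro b
    have e1 : height l b = height (x ::ₘ l.erase x) b := by rw [hcons]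
    rw [e1]
    unfold up
    rw [← hx, height_cons, height_cons]
    split_ifs <;> omega
  have h0 : height l (x + 1) = 0 := by
    unfold height
    rw [Multiset.card_eq_zero, Multiset.filter_eq_nil]
    intro y hy
    have := hle y hy
    omega
  have hpx : 0 < height l x := by
    rw [← hcons, height_cons, if_pos le_rfl]; omega
  have p0 : part (up l) 0 = part l 0 + 1 := by
    have e1 : part l 0 = x := by
      apply eq_of_le_iff
      intro a ha
      rw [le_part _ _ ha]
      constructor
      · intro hc
        by_contra hc2
        have := height_anti l (show x + 1 ≤ a by omega)
        omega
      · intro hc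
        have := height_anti l hc
        omega
    rw [e1]
    apply eq_of_le_iff
    intro a ha
    rw [le_part _ _ ha, hH]
    constructor
    · intro hc
      by_contra hc2
      have := height_anti l (show x + 1 ≤ a by omega)
      rw [if_neg (by omega)] at hc
      omega
    · intro hc
      by_cases he : a = x + 1
      · rw [if_pos he]; omega
      · have := height_anti l (show a ≤ x by omega)
        omega
  induction j with
  | zero => rw [psum_succ, psum_succ, psum_zero, psum_zero, p0]; omega
  | succ j ih =>
    rw [psum_succ, psum_succ l, ih]
    have : part (up l) (j + 1) = part l (j + 1) := by
      apply eq_of_le_iff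
      intro a ha
      rw [le_part _ _ ha, le_part _ _ ha, hH]
      split_ifs with he
      · rw [he, h0]; omega
      · omega
    omega

theorem csum_below (l : Ptn) (k d : ℕ) :
    csum l k + d * height l (k + d) ≤ csum l (k + d) := by
  suffices h : ∀ H, (∀ i, i ≤ k + d → H ≤ height l i) → csum l k + d * H ≤ csum l (k + d) from
    h _ (fun i hi => height_anti l hi)
  intro H
  induction d with
  | zero => intro _; simp
  | succ d ih =>
    intro hH
    have h1 := ih (fun i hi => hH i (by omega))
    have h2 := hH (k + d + 1) (by omega)
    rw [← add_assoc, csum_succ, add_mul]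
    omega

theorem csum_above (l : Ptn) (a d : ℕ) :
    csum l (a + d) ≤ csum l a + d * height l (a + 1) := by
  induction d with
  | zero => simp
  | succ d ih =>
    have := height_anti l (show a + 1 ≤ a + d + 1 by omega)
    rw [← add_assoc, csum_succ, add_mul]
    omega

theorem corner_facts {X : PType} {l : Ptn} (hl : InP X l) {a : ℕ} (ha : a ∈ l)
    (hb : (a + th X) % 2 = 1) :
    ∃ g, height l a = g + 2 ∧ height l (a + 1) ≤ g ∧ psum l (g + 2) = psum l (g + 1) + a ∧
      psum l (g + 1) = psum l g + a ∧
      (psum l (g + 2) + th X * (g + 2)) % 2 = 0 ∧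
      (psum l (g + 1) + th X * (g + 1)) % 2 = 1 ∧
      csum l a + psum l (g + 2) = a * (g + 2) + l.sum := by
  have h1 := hl.2 a ((bad_iff X a).2 hb)
  have h2 := Multiset.count_pos.2 ha
  have h3 := height_count l a
  rw [Nat.even_iff] at h1
  have h4 := psum_height_parity hl a
  have h5 := legendre_eq l a
  have h6 := hl.1 a ha
  obtain ⟨g, hg⟩ : ∃ g, height l a = g + 2 := ⟨height l a - 2, by omega⟩
  rw [hg] at h4 h5 h3
  have hpart : ∀ i, g ≤ i → i < g + 2 → part l i = a := by
    intro i hi1 hi2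
    have h7 := le_part l i h6
    have h8 := le_part l (a := a + 1) i (by omega)
    omega
  have p1 := psum_succ l g
  have p2 : psum l (g + 2) = psum l (g + 1) + part l (g + 1) := psum_succ l (g + 1)
  rw [hpart g (by omega) (by omega)] at p1
  rw [hpart (g + 1) (by omega) (by omega)] at p2
  refine ⟨g, hg, by omega, p2, p1, h4, ?_, h5⟩
  rcases th_cases X with e | e <;> rw [e] at hb h4 ⊢ <;>
    simp only [zero_mul, one_mul, add_zero] at hb h4 ⊢ <;> omega

theorem core (a g A E F n s : ℕ) (Y : PType) (mu : Ptn) (hmu : InP Y mu) (ha : 1 ≤ a)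
    (hE : E ≤ 1)
    (h1 : ∀ k d, k + d = a → psum mu k + d * (g + 2) ≤ A)
    (h2 : ∀ d, psum mu (a + d) ≤ A + d * g)
    (n0 : psum mu (a - 1) + (g + 2) + E ≤ A)
    (n1 : psum mu a + E ≤ A)
    (n2 : psum mu (a + 1) + E ≤ A + g)
    (par : (A + E + th Y * a) % 2 = 1)
    (hs : s + A = a * (g + 1) + n)
    (hlow : csum mu (g + 1) ≤ s + F)
    (hn : n + F < mu.sum + E + 1) : False := by
  have n1' : psum mu a + E + 1 ≤ A := by
    by_contra hc
    have e : psum mu a + E = A := by omega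
    obtain ⟨b, rfl⟩ : ∃ b, a = b + 1 := ⟨a - 1, by omega⟩
    have p1 := psum_succ mu b
    have p2 := psum_succ mu (b + 1)
    have po := parity_or hmu b
    rw [Nat.add_sub_cancel] at n0
    rcases po with po | po
    · omega
    · omega
  have hl := legendre_eq mu (g + 1)
  generalize height mu (g + 1) = k at hl
  rcases le_total k a with hk | hk
  · obtain ⟨d, rfl⟩ := Nat.exists_eq_add_of_le hk
    have q : psum mu k + d * (g + 1) + E + 1 ≤ A := by
      have h3 := h1 k d rfl
      have e : d * (g + 2) = d * (g + 1) + d := by ring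
      rcases d with _ | _ | d
      · simp only [zero_mul, add_zero] at *; omega
      · simp only [zero_add, one_mul] at *
        rw [Nat.add_sub_cancel] at n0
        omega
      · omega
    have e : (k + d) * (g + 1) = (g + 1) * k + d * (g + 1) := by ring
    omega
  · obtain ⟨d, rfl⟩ := Nat.exists_eq_add_of_le hk
    have q : psum mu (a + d) + E + 1 ≤ A + d * (g + 1) := by
      have h3 := h2 d
      have e : d * (g + 1) = d * g + d := by ring
      rcases d with _ | _ | d
      · simp only [zero_mul, add_zero] at *; omega
      · simp only [zero_add, one_mul] at *
        omega
      · omega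
    have e : (g + 1) * (a + d) = a * (g + 1) + d * (g + 1) := by ring
    omega

theorem bc_below (zeta eta : Ptn) (a q E : ℕ)
    (hA : csum eta a + psum eta q = a * q + eta.sum)
    (hz : psum zeta q + eta.sum = psum eta q + zeta.sum + E) (k d : ℕ) (hk : k + d = a) :
    csum zeta k + d * q + E ≤ csum eta a := by
  subst hk
  have h1 := legendre zeta k q
  have e : (k + d) * q = k * q + d * q := by ring
  omega

theorem bc_above (zeta eta : Ptn) (a q E : ℕ)
    (hA : csum eta a + psum eta (q + 2) = a * (q + 2) + eta.sum)
    (hz : psum zeta q + 2 * a + eta.sum = psum eta (q + 2) + zeta.sum + E) (d : ℕ) :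
    csum zeta (a + d) + E ≤ csum eta a + d * q := by
  have h1 := legendre zeta (a + d) q
  have e : (a + d) * q = a * q + d * q := by ring
  have e2 : a * (q + 2) = a * q + 2 * a := by ring
  omega

/-- The combination of the bounds for `ν` and for `ζ`, used in types B and C. -/
theorem core_bc (nu eta zeta mu : Ptn) (a q E F n s : ℕ) (Y : PType) (hmu : InP Y mu)
    (ha : 1 ≤ a) (hE : E ≤ 1)
    (hnu : height nu (a + 1) = height nu a)
    (hA : csum eta a + psum eta (q + 2) = a * (q + 2) + eta.sum)
    (hz1 : psum zeta (q + 2) + eta.sum = psum eta (q + 2) + zeta.sum + E)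
    (hz2 : psum zeta q + 2 * a + eta.sum = psum eta (q + 2) + zeta.sum + E)
    (hmd : ∀ k, psum mu k ≤ csum nu k + csum zeta k)
    (par : (csum nu a + csum eta a + E + th Y * a) % 2 = 1)
    (hs : s + (csum nu a + csum eta a) = a * (height nu a + q + 1) + n)
    (hlow : csum mu (height nu a + q + 1) ≤ s + F)
    (hn : n + F < mu.sum + E + 1) : False := by
  have b1 : ∀ k d, k + d = a →
      psum mu k + d * (height nu a + q + 2) + E ≤ csum nu a + csum eta a := by
    intro k d hk
    have h1 := bc_below zeta eta a (q + 2) E hA hz1 k d hk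
    have h2 := csum_below nu k d
    rw [hk] at h2
    have h3 := hmd k
    have e : d * (height nu a + q + 2) = d * height nu a + d * (q + 2) := by ring
    omega
  have b2 : ∀ d, psum mu (a + d) + E ≤ csum nu a + csum eta a + d * (height nu a + q) := by
    intro d
    have h1 := bc_above zeta eta a q E hA hz2 d
    have h2 := csum_above nu a d
    rw [hnu] at h2
    have h3 := hmd (a + d)
    have e : d * (height nu a + q) = d * height nu a + d * q := by ring
    omega
  refine core a (height nu a + q) (csum nu a + csum eta a) E F n s Y mu hmu ha hE ?_ ?_ ?_ ?_ ?_
    par hs hlow hn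
  · intro k d hk
    have := b1 k d hk
    omega
  · intro d
    have := b2 d
    omega
  · have := b1 (a - 1) 1 (by omega)
    omega
  · have := b1 a 0 rfl
    omega
  · have := b2 1
    omega

theorem mark_parity (X : PType) (a : ℕ) : markParity X a → (a + th X) % 2 = 0 := by
  cases X <;> simp only [markParity, th, Nat.even_iff, Nat.odd_iff] <;> omega

theorem marked_facts {X : PType} {nu eta : Ptn} (h : IsMarked X nu eta) :
    InP X nu ∧ InP X eta ∧ nu.sum % 2 = 0 ∧ (∀ a, (a + th X) % 2 = 1 → a ∉ nu) := by
  obtain ⟨h1, h2, h3, h4⟩ := h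
  have hn : ∀ a, (a + th X) % 2 = 1 → a ∉ nu := by
    intro a ha hc
    have := mark_parity X a (h3 a hc).2
    omega
  have hc : ∀ a, (a + th X) % 2 = 1 → nu.count a = 0 := fun a ha =>
    Multiset.count_eq_zero_of_notMem (hn a ha)
  refine ⟨⟨fun a ha => h1.1 a (Multiset.mem_add.2 (Or.inl ha)), fun a ha => ?_⟩,
    ⟨fun a ha => h1.1 a (Multiset.mem_add.2 (Or.inr ha)), fun a ha => ?_⟩, ?_, hn⟩
  · rw [hc a ((bad_iff X a).1 ha)]; simp
  · have := h1.2 a ha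
    rwa [Multiset.count_add, hc a ((bad_iff X a).1 ha), zero_add] at this
  · have e := psum_filter_parity (th X) nu (fun a ha => by rw [hc a ha]; simp)
    cases X
    · have := h4 (Or.inl rfl)
      rw [Nat.even_iff] at this
      simp only [th] at e
      omega
    · simp only [th] at e
      omega
    · have := h4 (Or.inr rfl)
      rw [Nat.even_iff] at this
      simp only [th] at e
      omega

set_option maxHeartbeats 4000000 in
theorem main_B (nu eta : Ptn) (h : IsMarked PType.B nu eta) (a : ℕ) (ha : a ∈ nu + eta)
    (hb : (a + th PType.B) % 2 = 1) (hh : height (nu + eta) a % 2 = 1)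
    (hodd : height nu a % 2 = 1) (xi omega : Ptn)
    (h2 : xi + omega = dS PType.B nu eta)
    (h3 : dS PType.C xi omega = nu + eta) : False := by
  obtain ⟨f1, f2, f3, f4⟩ := marked_facts h
  have hnot := f4 a hb
  have hae : a ∈ eta := (Multiset.mem_add.1 ha).resolve_left hnot
  have hpos := h.1.1 a ha
  have hnu := height_count nu a
  rw [Multiset.count_eq_zero_of_notMem hnot, add_zero] at hnu
  obtain ⟨g, g1, g2, g3, g4, g5, g6, g7⟩ := corner_facts h.1 ha hb
  obtain ⟨q, q1, q2, q3, q4, q5, q6, q7⟩ := corner_facts f2 hae hb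
  have hg : g = height nu a + q := by
    have := height_add nu eta a
    omega
  have hsum : (nu + eta).sum % 2 = 1 := Nat.odd_iff.1 h.2.1
  have hsum' : (nu + eta).sum = nu.sum + eta.sum := Multiset.sum_add _ _
  have hne : eta ≠ 0 := by rintro rfl; simp at hae
  have hds := sum_down f2.1 hne
  have c1 := collapse_spec PType.C (down eta) (fun _ => by rw [Nat.even_iff]; omega)
  have hzs : (collapse PType.C (down eta)).sum = (down eta).sum := c1.1.2.1
  simp only [dS] at h2 h3
  generalize collapse PType.C (down eta) = zeta at *
  have hts : (transpose (nu + zeta)).sum = nu.sum + zeta.sum := by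
    rw [sum_transpose, Multiset.sum_add]
  have c2 := collapse_spec PType.C (transpose (nu + zeta)) (fun _ => by rw [Nat.even_iff]; omega)
  have hms := c2.1.2.1
  rw [← h2] at c2 hms
  have hcard : q + 2 < Multiset.card eta := by
    by_contra hc
    have := psum_large eta (j := q + 2) (by omega)
    simp only [th] at q5
    omega
  have d1 := psum_down_eq f2.1 hne hcard
  have d2 := psum_down_eq f2.1 hne (j := q) (by omega)
  simp only [th, zero_mul, one_mul, add_zero] at c1 c2 hb g5 g6 q5 q6
  have z1 : psum zeta (q + 2) = psum eta (q + 2) := by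
    have e1 := c1.2 (q + 2)
    rw [ee_even 0 _ _ (by omega)] at e1
    omega
  have z2 : psum zeta q = psum eta q := by
    have e1 := c1.2 q
    rw [ee_even 0 _ _ (by omega)] at e1
    omega
  have hcs : csum (nu + eta) a = csum nu a + csum eta a := csum_add _ _ _
  have c3 := collapse_spec PType.B (up omega) (by simp)
  have c3c := csum_le_of_dom c3.1.2.2.1 c3.1.2.1 (g + 1)
  generalize collapse PType.B (up omega) = zeta' at *
  have c4 := (collapse_spec PType.B (transpose (xi + zeta')) (by simp)).2 (g + 1)
  rw [h3] at c4
  have c4e := ee_odd _ _ _ _ c4 (by simp only [th]; omega)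
  rw [c4e, psum_transpose, csum_add] at c4
  have c5 := csum_up omega (g + 1)
  have c6 := csum_add xi omega (g + 1)
  have ev : (a * (g + 2)) % 2 = 0 := by rw [Nat.mul_mod, show a % 2 = 0 by omega]; simp
  have er : a * (g + 2) = a * (g + 1) + a := by ring
  subst hg
  refine core_bc nu eta zeta (xi + omega) a q 1 0 (nu + eta).sum
    (psum (nu + eta) (height nu a + q + 1))
    PType.C c2.1.1 hpos le_rfl hnu.symm q7 (by omega) (by omega) ?_ ?_ ?_ (by omega) (by omega)
  · intro k
    have := c2.1.2.2.1 k
    rw [psum_transpose, csum_add] at this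
    exact this
  · simp only [th]; omega
  · omega

set_option maxHeartbeats 4000000 in
theorem main_C (nu eta : Ptn) (h : IsMarked PType.C nu eta) (a : ℕ) (ha : a ∈ nu + eta)
    (hb : (a + th PType.C) % 2 = 1) (hh : height (nu + eta) a % 2 = 0)
    (hodd : height nu a % 2 = 1) (xi omega : Ptn) (hm : IsMarked PType.B xi omega)
    (h2 : xi + omega = dS PType.C nu eta)
    (h3 : dS PType.B xi omega = nu + eta) : False := by
  obtain ⟨f1, f2, f3, f4⟩ := marked_facts h
  have hnot := f4 a hb
  have hae : a ∈ eta := (Multiset.mem_add.1 ha).resolve_left hnot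
  have hpos := h.1.1 a ha
  have hnu := height_count nu a
  rw [Multiset.count_eq_zero_of_notMem hnot, add_zero] at hnu
  obtain ⟨g, g1, g2, g3, g4, g5, g6, g7⟩ := corner_facts h.1 ha hb
  obtain ⟨q, q1, q2, q3, q4, q5, q6, q7⟩ := corner_facts f2 hae hb
  have hg : g = height nu a + q := by
    have := height_add nu eta a
    omega
  have hsum : (nu + eta).sum % 2 = 0 := Nat.even_iff.1 h.2.1
  have hsum' : (nu + eta).sum = nu.sum + eta.sum := Multiset.sum_add _ _
  have hne : eta ≠ 0 := by rintro rfl; simp at hae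
  have hds := sum_up hne
  have c1 := collapse_spec PType.B (up eta) (by simp)
  have hzs : (collapse PType.B (up eta)).sum = (up eta).sum := c1.1.2.1
  simp only [dS] at h2 h3
  generalize collapse PType.B (up eta) = zeta at *
  have hts : (transpose (nu + zeta)).sum = nu.sum + zeta.sum := by
    rw [sum_transpose, Multiset.sum_add]
  have c2 := collapse_spec PType.B (transpose (nu + zeta)) (by simp)
  have hms := c2.1.2.1
  rw [← h2] at c2 hms
  obtain ⟨r, rfl⟩ : ∃ r, q = r + 1 := by
    have := height_add nu eta a
    exact ⟨q - 1, by omega⟩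
  have d1 := psum_up_eq hne (r + 2)
  have d2 := psum_up_eq hne r
  rw [show r + 2 + 1 = r + 1 + 2 by omega] at d1
  have hqpar : (r + 1) % 2 = 1 := by
    have := height_add nu eta a
    omega
  simp only [th, zero_mul, one_mul, add_zero] at c1 c2 hb g5 g6 q5 q6
  have z1 : psum zeta (r + 1 + 2) = psum eta (r + 1 + 2) + 1 := by
    have e1 := c1.2 (r + 1 + 2)
    rw [ee_even 1 _ _ (by omega)] at e1
    omega
  have z2 : psum zeta (r + 1) = psum eta (r + 1) + 1 := by
    have e1 := c1.2 (r + 1)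
    rw [ee_even 1 _ _ (by omega)] at e1
    omega
  have hcs : csum (nu + eta) a = csum nu a + csum eta a := csum_add _ _ _
  obtain ⟨m1, m2, m3, m4⟩ := marked_facts hm
  have hmsum : (xi + omega).sum % 2 = 1 := Nat.odd_iff.1 hm.2.1
  have hmsum' : (xi + omega).sum = xi.sum + omega.sum := Multiset.sum_add _ _
  have hone : omega ≠ 0 := by
    rintro rfl
    have h00 : (0 : Ptn).sum = 0 := Multiset.sum_zero
    rw [h00] at hmsum'
    omega
  have hdo := sum_down m2.1 hone
  have c3 := collapse_spec PType.C (down omega) (fun _ => by rw [Nat.even_iff]; omega)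
  have c3c := csum_le_of_dom c3.1.2.2.1 c3.1.2.1 (g + 1)
  have c3s := c3.1.2.1
  generalize collapse PType.C (down omega) = zeta' at *
  have hts' : (transpose (xi + zeta')).sum = xi.sum + zeta'.sum := by
    rw [sum_transpose, Multiset.sum_add]
  have c4 := (collapse_spec PType.C (transpose (xi + zeta'))
    (fun _ => by rw [Nat.even_iff]; omega)).2 (g + 1)
  rw [h3] at c4
  have c4e := ee_odd _ _ _ _ c4 (by simp only [th]; omega)
  rw [c4e, psum_transpose, csum_add] at c4
  have c5 := csum_down m2.1 hone (g + 1)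
  have c6 := csum_add xi omega (g + 1)
  have ev : (a * (g + 2)) % 2 = 0 := by
    rw [Nat.mul_mod, show (g + 2) % 2 = 0 by omega]; simp
  have er : a * (g + 2) = a * (g + 1) + a := by ring
  subst hg
  refine core_bc nu eta zeta (xi + omega) a (r + 1) 0 1 (nu + eta).sum
    (psum (nu + eta) (height nu a + (r + 1) + 1))
    PType.B c2.1.1 hpos (by omega) hnu.symm q7 (by omega) (by omega) ?_ ?_ ?_ (by omega) (by omega)
  · intro k
    have := c2.1.2.2.1 k
    rw [psum_transpose, csum_add] at this
    exact this
  · simp only [th]; omega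
  · omega

set_option maxHeartbeats 4000000 in
theorem main_D (nu eta : Ptn) (h : IsMarked PType.D nu eta) (a : ℕ) (ha : a ∈ nu + eta)
    (hb : (a + th PType.D) % 2 = 1) (hh : height (nu + eta) a % 2 = 0)
    (hodd : height nu a % 2 = 1) (xi omega : Ptn)
    (h2 : xi + omega = dS PType.D nu eta)
    (h3 : dS PType.D xi omega = nu + eta) : False := by
  obtain ⟨f1, f2, f3, f4⟩ := marked_facts h
  have hnot := f4 a hb
  have hae : a ∈ eta := (Multiset.mem_add.1 ha).resolve_left hnot
  have hpos := h.1.1 a ha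
  have hnu := height_count nu a
  rw [Multiset.count_eq_zero_of_notMem hnot, add_zero] at hnu
  obtain ⟨g, g1, g2, g3, g4, g5, g6, g7⟩ := corner_facts h.1 ha hb
  obtain ⟨q, q1, q2, q3, q4, q5, q6, q7⟩ := corner_facts f2 hae hb
  have hadd := height_add nu eta a
  have hg : g = height nu a + q := by omega
  have hsum : (nu + eta).sum % 2 = 0 := Nat.even_iff.1 h.2.1
  have hsum' : (nu + eta).sum = nu.sum + eta.sum := Multiset.sum_add _ _
  have c1 := collapse_spec PType.D (transpose eta) (by simp)
  have hzs := c1.1.2.1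
  simp only [dS] at h2 h3
  generalize collapse PType.D (transpose eta) = zeta at *
  have hts : (transpose (nu + transpose zeta)).sum = nu.sum + zeta.sum := by
    rw [sum_transpose, Multiset.sum_add, sum_transpose]
  have c2 := collapse_spec PType.D (transpose (nu + transpose zeta)) (by simp)
  have hms := c2.1.2.1
  rw [← h2] at c2 hms
  rw [sum_transpose] at hzs
  have hcs : csum (nu + eta) a = csum nu a + csum eta a := csum_add _ _ _
  have c3 := (collapse_spec PType.D (transpose omega) (by simp)).2 (g + 1)
  generalize collapse PType.D (transpose omega) = zeta' at *
  have c3' := ee_le (th PType.D) (transpose omega) (g + 1)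
  rw [psum_transpose] at c3
  have c4 := (collapse_spec PType.D (transpose (xi + transpose zeta')) (by simp)).2 (g + 1)
  rw [h3] at c4
  have c4e := ee_odd _ _ _ _ c4 g6
  rw [c4e, psum_transpose, csum_add, csum_transpose] at c4
  have c6 := csum_add xi omega (g + 1)
  simp only [th, one_mul] at c1 c2 c3 c3' hb g5 g6 q5 q6
  have hmd : ∀ k, psum (xi + omega) k ≤ csum nu k + psum zeta k := by
    intro k
    have := c2.1.2.2.1 k
    rw [psum_transpose, csum_add, csum_transpose] at this
    exact this
  have hz : ∀ k, psum zeta k + ee 1 (transpose eta) k = csum eta k := by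
    intro k
    have := c1.2 k
    rwa [psum_transpose] at this
  have ev : (a * (g + 2)) % 2 = 0 := by rw [Nat.mul_mod, show a % 2 = 0 by omega]; simp
  have ev2 : (a * (q + 2)) % 2 = 0 := by rw [Nat.mul_mod, show a % 2 = 0 by omega]; simp
  have er : a * (g + 2) = a * (g + 1) + a := by ring
  obtain ⟨b, rfl⟩ : ∃ b, a = b + 2 := ⟨a - 2, by omega⟩
  have hcount := height_count eta (b + 2)
  have hce := f2.2 (b + 2) ((bad_iff PType.D _).2 hb)
  rw [Nat.even_iff] at hce
  have cs1 : csum eta (b + 2) = csum eta (b + 1) + height eta (b + 2) := csum_succ eta (b + 1)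
  have cs2 : csum eta (b + 3) = csum eta (b + 2) + height eta (b + 3) := csum_succ eta (b + 2)
  have cn1 : csum nu (b + 2) = csum nu (b + 1) + height nu (b + 2) := csum_succ nu (b + 1)
  have cn2 : csum nu (b + 3) = csum nu (b + 2) + height nu (b + 3) := csum_succ nu (b + 2)
  have ee0 : ee 1 (transpose eta) (b + 1) = 1 := by
    have := ee_cases 1 (transpose eta) b
    rw [psum_transpose, part_transpose, part_transpose, one_mul] at this
    rw [show b + 1 + 1 = b + 2 from rfl] at this
    omega
  have ee1 : ee 1 (transpose eta) (b + 2) = 1 := by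
    have := ee_cases 1 (transpose eta) (b + 1)
    rw [psum_transpose, part_transpose, part_transpose, one_mul] at this
    rw [show b + 1 + 1 = b + 2 from rfl] at this
    omega
  have ee2 : ee 1 (transpose eta) (b + 3) = 1 := by
    have := ee_cases 1 (transpose eta) (b + 2)
    rw [psum_transpose, part_transpose, part_transpose, one_mul] at this
    rw [show b + 2 + 1 = b + 3 from rfl] at this hcount
    omega
  have hz0 := hz (b + 1)
  have hz1 := hz (b + 2)
  have hz2 := hz (b + 3)
  have hm0 := hmd (b + 1)
  have hm1 := hmd (b + 2)
  have hm2 := hmd (b + 3)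
  rw [show b + 2 + 1 = b + 3 from rfl] at q2 hnu
  refine core (b + 2) g (csum nu (b + 2) + csum eta (b + 2)) 1 1 (nu + eta).sum
    (psum (nu + eta) (g + 1)) PType.D (xi + omega) c2.1.1 hpos le_rfl ?_ ?_ ?_ ?_ ?_
    ?_ ?_ ?_ ?_
  · intro k d hk
    have k1 := csum_below nu k d
    have k2 := csum_below eta k d
    have k3 := hmd k
    have k4 := hz k
    rw [hk] at k1 k2
    rw [q1] at k2
    have e : d * (g + 2) = d * height nu (b + 2) + d * (q + 2) := by rw [hg]; ring
    omega
  · intro d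
    have k1 := csum_above nu (b + 2) d
    have k2 := csum_above eta (b + 2) d
    have k3 := hmd (b + 2 + d)
    have k4 := hz (b + 2 + d)
    rw [show b + 2 + 1 = b + 3 from rfl] at k1 k2
    rw [← hnu] at k1
    have k5 : d * height eta (b + 3) ≤ d * q := Nat.mul_le_mul_left _ q2
    have e : d * g = d * height nu (b + 2) + d * q := by rw [hg]; ring
    omega
  · rw [show b + 2 - 1 = b + 1 from rfl]
    omega
  · omega
  · rw [show b + 2 + 1 = b + 3 from rfl]
    omega
  · simp only [th]; omega
  · omega
  · omega
  · omega

/-- Proposition 5.13 of the paper: if `⟨λ,ν⟩` is a nonspecial reduced marked partition and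
`μ = d_S⟨λ,ν⟩`, then no marked partition of the dual type with underlying partition `μ`
has Sommers dual equal to `λ`. -/
theorem no_dS_preimage_for_nonspecial (X : PType) (nu eta : Ptn)
    (h : IsMarked X nu eta)
    (hr : Reduced X (nu + eta) nu)
    (hns : ¬ SpecialMP X (nu + eta) nu)
    (hC : X = PType.C → eta ≠ 0) :
    ¬ ∃ xi omega : Ptn, IsMarked (dualType X) xi omega ∧
        xi + omega = dS X nu eta ∧
        (X = PType.B → omega ≠ 0) ∧
        dS (dualType X) xi omega = nu + eta := by
  rintro ⟨xi, omega, h1, h2, -, h3⟩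
  unfold SpecialMP at hns
  push Not at hns
  obtain ⟨a, ha, hanti, hodd⟩ := hns
  rw [Nat.not_even_iff] at hodd
  cases X
  · simp only [AntiPart, Nat.even_iff, Nat.odd_iff] at hanti
    exact main_B nu eta h a ha (by simp only [th]; omega) hanti.2 hodd xi omega h2 h3
  · simp only [AntiPart, Nat.even_iff, Nat.odd_iff] at hanti
    exact main_C nu eta h a ha (by simp only [th]; omega) hanti.2 hodd xi omega h1 h2 h3
  · simp only [AntiPart, Nat.even_iff] at hanti
    exact main_D nu eta h a ha (by simp only [th]; omega) hanti.2 hodd xi omega h2 h3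

end NilDual
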